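/- Let X and Y be compact metric spaces and let 𝒯 be a standard backward linear transfer on P(X) × P(Y) with 𝒯 ≥ 0 and Kantorovich operator T. For g ∈ C(Y) and x ∈ X, the function λ ↦ T(λg)(x)/λ is monotone nondecreasing on (0,∞), so the recession operator T_r g(x) := lim_{λ→∞} T(λg)(x)/λ exists in [−∞,∞]. Then: (a) for every μ ∈ P(X) such that 𝒯(μ,ν₀) < +∞ for some ν₀, and every g ∈ C(Y), sup{ ∫_Y g dν : ν ∈ P(Y), 𝒯(μ,ν) < +∞ } = ∫_X T_r g dμ; (b) D(𝒯) := {(μ,ν) : 𝒯(μ,ν) < +∞} is contained in D(𝒯_r) := { (μ,ν) : ∫_Y g dν ≤ ∫_X T_r g dμ for all g ∈ C(Y) }; (c) D(𝒯_r) is the smallest backward transfer set containing D(𝒯): if S is any convex weak*-compact gambling house S ⊆ P(X) × P(Y) with D(𝒯) ⊆ S and S = { (μ,ν) : ∫_Y g dν ≤ ∫_X T_S g dμ for all g ∈ C(Y) }, where T_S g(x) := sup{ ∫_Y g dσ : (δ_x,σ) ∈ S }, then D(𝒯_r) ⊆ S. -/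

import Mathlib

open MeasureTheory Topology Filter Set
open scoped ENNReal NNReal

noncomputable section

/-- The positive part of an extended real number, as an element of `ℝ≥0∞`. -/
def epos (a : EReal) : ℝ≥0∞ := if a = ⊤ then ⊤ else ENNReal.ofReal a.toReal

/-- Signed integral of an `EReal`-valued function (the natural value when `f` is
bounded above or bounded below). -/
def eint {α : Type*} [MeasurableSpace α] (μ : Measure α) (f : α → EReal) : EReal :=
  ((∫⁻ x, epos (f x) ∂μ : ℝ≥0∞) : EReal) - ((∫⁻ x, epos (-(f x)) ∂μ : ℝ≥0∞) : EReal)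

/-- The Dirac measure at a point, as a probability measure. -/
def diracP {α : Type*} [MeasurableSpace α] (x : α) : ProbabilityMeasure α :=
  ⟨Measure.dirac x, inferInstance⟩

/-- The backward Kantorovich operator of a transfer functional `𝒯`, on continuous
functions: `T⁻g(x) = sup_{σ ∈ P(Y)} { ∫ g dσ − 𝒯(δ_x, σ) }`. -/
def TopC {X Y : Type*} [MeasurableSpace X] [TopologicalSpace Y] [MeasurableSpace Y]
    (𝒯 : ProbabilityMeasure X → ProbabilityMeasure Y → EReal)
    (g : C(Y, ℝ)) (x : X) : EReal :=
  ⨆ σ : ProbabilityMeasure Y, (((∫ y, g y ∂(σ : Measure Y)) : ℝ) : EReal) - 𝒯 (diracP x) σ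

/-- The backward Kantorovich operator of a transfer functional `𝒯`, extended to
extended-real-valued functions. -/
def TopU {X Y : Type*} [MeasurableSpace X] [MeasurableSpace Y]
    (𝒯 : ProbabilityMeasure X → ProbabilityMeasure Y → EReal)
    (g : Y → EReal) (x : X) : EReal :=
  ⨆ σ : ProbabilityMeasure Y, eint (σ : Measure Y) g - 𝒯 (diracP x) σ

/-- A backward linear transfer: a proper, bounded below, jointly convex,
weak*-lower semicontinuous functional on `P(X) × P(Y)` with values in `ℝ ∪ {+∞}`,
such that the Legendre transform of each partial map `𝒯(μ,·)` is given by
integrating the backward Kantorovich operator against `μ`. -/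
def IsBLT {X Y : Type*} [TopologicalSpace X] [MeasurableSpace X] [OpensMeasurableSpace X]
    [TopologicalSpace Y] [MeasurableSpace Y] [OpensMeasurableSpace Y]
    (𝒯 : ProbabilityMeasure X → ProbabilityMeasure Y → EReal) : Prop :=
  (∀ μ ν, 𝒯 μ ν ≠ ⊥) ∧
  (∃ μ ν, 𝒯 μ ν ≠ ⊤) ∧
  (∃ m : ℝ, ∀ μ ν, (m : EReal) ≤ 𝒯 μ ν) ∧
  (∀ (μ₁ μ₂ : ProbabilityMeasure X) (ν₁ ν₂ : ProbabilityMeasure Y)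
      (μ : ProbabilityMeasure X) (ν : ProbabilityMeasure Y) (a b : ℝ≥0),
      a + b = 1 →
      (μ : Measure X) = a • (μ₁ : Measure X) + b • (μ₂ : Measure X) →
      (ν : Measure Y) = a • (ν₁ : Measure Y) + b • (ν₂ : Measure Y) →
      𝒯 μ ν ≤ ((a : ℝ) : EReal) * 𝒯 μ₁ ν₁ + ((b : ℝ) : EReal) * 𝒯 μ₂ ν₂) ∧
  LowerSemicontinuous (fun p : ProbabilityMeasure X × ProbabilityMeasure Y => 𝒯 p.1 p.2) ∧
  (∀ (μ : ProbabilityMeasure X) (g : C(Y, ℝ)),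
      (⨆ σ : ProbabilityMeasure Y,
        (((∫ y, g y ∂(σ : Measure Y)) : ℝ) : EReal) - 𝒯 μ σ)
        = eint (μ : Measure X) (TopC 𝒯 g))

/-- A transfer is standard if every Dirac measure admits a finite-cost target. -/
def IsStandardT {X Y : Type*} [MeasurableSpace X] [MeasurableSpace Y]
    (𝒯 : ProbabilityMeasure X → ProbabilityMeasure Y → EReal) : Prop :=
  ∀ x : X, ∃ σ : ProbabilityMeasure Y, 𝒯 (diracP x) σ ≠ ⊤

/-- Convexity of a set of pairs of probability measures, via convex combinations
of the underlying measures. -/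
def PConvex {X Y : Type*} [MeasurableSpace X] [MeasurableSpace Y]
    (C : Set (ProbabilityMeasure X × ProbabilityMeasure Y)) : Prop :=
  ∀ p ∈ C, ∀ q ∈ C, ∀ a b : ℝ≥0, a + b = 1 →
    ∀ (μ : ProbabilityMeasure X) (ν : ProbabilityMeasure Y),
      (μ : Measure X) = a • (p.1 : Measure X) + b • (q.1 : Measure X) →
      (ν : Measure Y) = a • (p.2 : Measure Y) + b • (q.2 : Measure Y) →
      (μ, ν) ∈ C

/-- A gambling house: every Dirac measure has at least one target in `S`. -/
def IsGamblingHouse {X Y : Type*} [MeasurableSpace X] [MeasurableSpace Y]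
    (S : Set (ProbabilityMeasure X × ProbabilityMeasure Y)) : Prop :=
  ∀ x : X, ∃ σ : ProbabilityMeasure Y, (diracP x, σ) ∈ S

/-- The (positively 1-homogeneous) Kantorovich operator of a gambling house:
`Tg(x) = sup { ∫ g dσ : (δ_x, σ) ∈ S }`. -/
def houseOp {X Y : Type*} [MeasurableSpace X] [TopologicalSpace Y] [MeasurableSpace Y]
    (S : Set (ProbabilityMeasure X × ProbabilityMeasure Y)) (g : C(Y, ℝ)) (x : X) : EReal :=
  ⨆ σ ∈ {σ : ProbabilityMeasure Y | (diracP x, σ) ∈ S},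
    (((∫ y, g y ∂(σ : Measure Y)) : ℝ) : EReal)

/-- The recession operator `T_r g(x) = lim_{λ→∞} T(λg)(x)/λ` of the Kantorovich
operator of a (nonnegative) transfer, realised as a monotone supremum. -/
def Trec {X Y : Type*} [MeasurableSpace X] [TopologicalSpace Y] [MeasurableSpace Y]
    (𝒯 : ProbabilityMeasure X → ProbabilityMeasure Y → EReal)
    (g : C(Y, ℝ)) (x : X) : EReal :=
  ⨆ l : {l : ℝ // 0 < l}, (((1 / (l : ℝ)) : ℝ) : EReal) * TopC 𝒯 ((l : ℝ) • g) x

theorem EReal.coe_mul_iSup_of_pos {ι : Sort*} {c : ℝ} (hc : 0 < c) (f : ι → EReal) :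
    (c : EReal) * ⨆ i, f i = ⨆ i, (c : EReal) * f i := by
  have hc' : (0 : EReal) < c := by exact_mod_cast hc
  apply le_antisymm
  · rw [mul_comm, ← EReal.le_div_iff_mul_le hc' (EReal.coe_ne_top c)]
    refine iSup_le fun i => ?_
    rw [EReal.le_div_iff_mul_le hc' (EReal.coe_ne_top c), mul_comm]
    exact le_iSup (fun i => (c : EReal) * f i) i
  · exact iSup_le fun i => mul_le_mul_of_nonneg_left (le_iSup f i) hc'.le

theorem epos_eq_toENNReal : epos = EReal.toENNReal := rfl

theorem eint_mono {α : Type*} [MeasurableSpace α] (μ : Measure α) {f g : α → EReal}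
    (h : f ≤ g) : eint μ f ≤ eint μ g := by
  unfold eint
  simp only [epos_eq_toENNReal]
  refine EReal.sub_le_sub ?_ ?_
  · exact EReal.coe_ennreal_le_coe_ennreal_iff.2
      (lintegral_mono fun x => EReal.toENNReal_le_toENNReal (h x))
  · exact EReal.coe_ennreal_le_coe_ennreal_iff.2
      (lintegral_mono fun x => EReal.toENNReal_le_toENNReal (EReal.neg_le_neg_iff.2 (h x)))

theorem eint_const_mul {α : Type*} [MeasurableSpace α] (μ : Measure α) {c : ℝ} (hc : 0 < c)
    (f : α → EReal) : eint μ (fun x => (c : EReal) * f x) = (c : EReal) * eint μ f := by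
  have hc' : (0 : EReal) ≤ c := by exact_mod_cast hc.le
  unfold eint
  simp only [epos_eq_toENNReal, ← mul_neg, EReal.toENNReal_mul hc']
  have hct : (c : EReal).toENNReal ≠ ⊤ := by simp
  rw [lintegral_const_mul' _ _ hct, lintegral_const_mul' _ _ hct,
    EReal.mul_sub_of_nonneg_of_ne_top hc' (EReal.coe_ne_top c), EReal.coe_ennreal_mul,
    EReal.coe_ennreal_mul, EReal.coe_toENNReal hc']

/-- Monotone convergence for the signed integral. -/
theorem eint_iSup {α : Type*} [MeasurableSpace α] (μ : Measure α) {f : ℕ → α → EReal}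
    (hf : ∀ n, Measurable (f n)) (hmono : Monotone f) (h0 : eint μ (f 0) ≠ ⊥) :
    eint μ (fun x => ⨆ n, f n x) = ⨆ n, eint μ (f n) := by
  have hlim (x : α) : Tendsto (fun n => f n x) atTop (𝓝 (⨆ n, f n x)) :=
    tendsto_atTop_iSup fun m n h => hmono h x
  have hneg0 : ∫⁻ x, epos (-(f 0 x)) ∂μ ≠ ⊤ := fun h => h0 (by simp [eint, h])
  have hanti : Antitone fun n x => epos (-(f n x)) := fun m n h x =>
    EReal.toENNReal_le_toENNReal (EReal.neg_le_neg_iff.2 (hmono h x))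
  have hpos := lintegral_tendsto_of_tendsto_of_monotone (μ := μ)
    (f := fun n x => epos (f n x)) (F := fun x => epos (⨆ n, f n x))
    (fun n => (hf n).ereal_toENNReal.aemeasurable)
    (ae_of_all _ fun x m n h => EReal.toENNReal_le_toENNReal (hmono h x))
    (ae_of_all _ fun x => (EReal.continuous_toENNReal.tendsto _).comp (hlim x))
  have hneg := lintegral_tendsto_of_tendsto_of_antitone (μ := μ)
    (f := fun n x => epos (-(f n x))) (F := fun x => epos (-(⨆ n, f n x)))
    (fun n => (hf n).neg.ereal_toENNReal.aemeasurable)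
    (ae_of_all _ fun x m n h => hanti h x) hneg0
    (ae_of_all _ fun x =>
      ((EReal.continuous_toENNReal.comp continuous_neg).tendsto _).comp (hlim x))
  have hfin : ∫⁻ x, epos (-(⨆ n, f n x)) ∂μ ≠ ⊤ :=
    ne_top_of_le_ne_top hneg0 (lintegral_mono fun x =>
      EReal.toENNReal_le_toENNReal (EReal.neg_le_neg_iff.2 (le_iSup (fun n => f n x) 0)))
  refine tendsto_nhds_unique (f := fun n => eint μ (f n)) (l := atTop) ?_
    (tendsto_atTop_iSup fun m n h => eint_mono μ (hmono h))
  have hadd := EReal.continuousAt_add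
    (p := (((∫⁻ x, epos (⨆ n, f n x) ∂μ : ℝ≥0∞) : EReal),
      -((∫⁻ x, epos (-(⨆ n, f n x)) ∂μ : ℝ≥0∞) : EReal)))
    (Or.inr (by simpa using hfin)) (Or.inl (by simp))
  exact hadd.tendsto.comp
    (((continuous_coe_ennreal_ereal.tendsto _).comp hpos).prodMk_nhds
      ((continuous_neg.tendsto _).comp ((continuous_coe_ennreal_ereal.tendsto _).comp hneg)))

/-- The supremum over one variable, in a compact space, of an upper semicontinuous function is measurable. -/
theorem UpperSemicontinuous.measurable_iSup_of_compactSpace {α β : Type*} [TopologicalSpace α]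
    [MeasurableSpace α] [OpensMeasurableSpace α] [TopologicalSpace β] [CompactSpace β]
    {F : α × β → EReal} (hF : UpperSemicontinuous F) :
    Measurable fun x => ⨆ y, F (x, y) := by
  rcases isEmpty_or_nonempty β with hβ | hβ
  · simp only [iSup_of_empty]
    exact measurable_const
  refine measurable_of_Ici fun a => ?_
  have hset : (fun x => ⨆ y, F (x, y)) ⁻¹' Ici a = Prod.fst '' (F ⁻¹' Ici a) := by
    ext x
    constructor
    · intro hx
      obtain ⟨y, -, hy⟩ := UpperSemicontinuousOn.exists_isMaxOn univ_nonempty isCompact_univ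
        ((hF.comp (Continuous.prodMk_right x)).upperSemicontinuousOn univ)
      have hle : ⨆ z, F (x, z) ≤ F (x, y) := iSup_le fun z => hy (mem_univ z)
      exact ⟨(x, y), le_trans (mem_Ici.1 hx) hle, rfl⟩
    · rintro ⟨⟨x', y⟩, hy, rfl⟩
      exact le_trans (mem_Ici.1 hy) (le_iSup (fun y => F (x', y)) y)
  rw [hset]
  exact (isClosedMap_fst_of_compactSpace _ (hF.isClosed_preimage a)).measurableSet

theorem measurable_TopC {X Y : Type*}
    [MetricSpace X] [MeasurableSpace X] [BorelSpace X]
    [MetricSpace Y] [CompactSpace Y] [MeasurableSpace Y] [BorelSpace Y]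
    {𝒯 : ProbabilityMeasure X → ProbabilityMeasure Y → EReal}
    (h𝒯 : LowerSemicontinuous (fun p : ProbabilityMeasure X × ProbabilityMeasure Y => 𝒯 p.1 p.2))
    (g : C(Y, ℝ)) : Measurable (TopC 𝒯 g) := by
  refine UpperSemicontinuous.measurable_iSup_of_compactSpace (α := X) (β := ProbabilityMeasure Y)
    (F := fun p => (((∫ y, g y ∂(p.2 : Measure Y)) : ℝ) : EReal) - 𝒯 (diracP p.1) p.2) ?_
  have hd : Continuous fun p : X × ProbabilityMeasure Y => (diracP p.1, p.2) :=
    (continuous_diracProba.comp continuous_fst).prodMk continuous_snd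
  have hI : Continuous fun p : X × ProbabilityMeasure Y =>
      (((∫ y, g y ∂(p.2 : Measure Y)) : ℝ) : EReal) :=
    continuous_coe_real_ereal.comp
      ((ProbabilityMeasure.continuous_integral_continuousMap g).comp continuous_snd)
  have hN : UpperSemicontinuous fun p : X × ProbabilityMeasure Y => -𝒯 (diracP p.1) p.2 :=
    continuous_neg.comp_lowerSemicontinuous_antitone (h𝒯.comp hd)
      fun a b h => EReal.neg_le_neg_iff.2 h
  exact hI.upperSemicontinuous.add' hN fun p => EReal.continuousAt_add (by simp) (by simp)

theorem coe_mul_iSup_integral_smul_sub {Y : Type*} [TopologicalSpace Y] [MeasurableSpace Y]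
    (C : ProbabilityMeasure Y → EReal) (g : C(Y, ℝ)) {l : ℝ} (hl : 0 < l) :
    (((1 / l) : ℝ) : EReal) *
        ⨆ σ : ProbabilityMeasure Y, (((∫ y, (l • g) y ∂(σ : Measure Y)) : ℝ) : EReal) - C σ =
      ⨆ σ : ProbabilityMeasure Y,
        (((∫ y, g y ∂(σ : Measure Y)) : ℝ) : EReal) - (((1 / l) : ℝ) : EReal) * C σ := by
  have hl' : 0 < 1 / l := by positivity
  rw [EReal.coe_mul_iSup_of_pos hl']
  refine iSup_congr fun σ => ?_
  rw [EReal.mul_sub_of_nonneg_of_ne_top (by exact_mod_cast hl'.le) (EReal.coe_ne_top _)]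
  congr 1
  rw [← EReal.coe_mul]
  congr 1
  simp only [ContinuousMap.coe_smul, Pi.smul_apply, smul_eq_mul, integral_const_mul]
  field_simp

theorem monotoneOn_coe_mul_TopC {X Y : Type*} [MeasurableSpace X] [TopologicalSpace Y]
    [MeasurableSpace Y] {𝒯 : ProbabilityMeasure X → ProbabilityMeasure Y → EReal}
    (hpos : ∀ μ ν, 0 ≤ 𝒯 μ ν) (g : C(Y, ℝ)) (x : X) :
    MonotoneOn (fun l : ℝ => (((1 / l) : ℝ) : EReal) * TopC 𝒯 (l • g) x) (Ioi (0 : ℝ)) := by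
  intro a ha b hb hab
  simp only [TopC]
  rw [coe_mul_iSup_integral_smul_sub _ g ha, coe_mul_iSup_integral_smul_sub _ g hb]
  refine iSup_mono fun σ => EReal.sub_le_sub le_rfl ?_
  exact mul_le_mul_of_nonneg_right
    (by exact_mod_cast one_div_le_one_div_of_le ha hab) (hpos _ _)

theorem Trec_eq_iSup_nat {X Y : Type*} [MeasurableSpace X] [TopologicalSpace Y]
    [MeasurableSpace Y] {𝒯 : ProbabilityMeasure X → ProbabilityMeasure Y → EReal}
    (hpos : ∀ μ ν, 0 ≤ 𝒯 μ ν) (g : C(Y, ℝ)) (x : X) :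
    Trec 𝒯 g x = ⨆ n : ℕ,
      (((1 / ((n : ℝ) + 1)) : ℝ) : EReal) * TopC 𝒯 (((n : ℝ) + 1) • g) x := by
  apply le_antisymm
  · refine iSup_le fun ⟨l, hl⟩ => ?_
    obtain ⟨n, hn⟩ := exists_nat_ge l
    refine le_trans (monotoneOn_coe_mul_TopC hpos g x hl ?_ ?_)
      (le_iSup (fun n : ℕ => (((1 / ((n : ℝ) + 1)) : ℝ) : EReal) *
        TopC 𝒯 (((n : ℝ) + 1) • g) x) n)
    · exact mem_Ioi.2 (by positivity)
    · linarith
  · refine iSup_le fun n => ?_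
    exact le_iSup (fun l : {l : ℝ // 0 < l} =>
      (((1 / (l : ℝ)) : ℝ) : EReal) * TopC 𝒯 ((l : ℝ) • g) x) ⟨(n : ℝ) + 1, by positivity⟩

theorem iSup_integral_eq_iSup_iSup_sub {Y : Type*} [TopologicalSpace Y] [MeasurableSpace Y]
    {C : ProbabilityMeasure Y → EReal} (hC : ∀ ν, 0 ≤ C ν) (g : C(Y, ℝ)) :
    (⨆ ν ∈ {ν : ProbabilityMeasure Y | C ν ≠ ⊤}, (((∫ y, g y ∂(ν : Measure Y)) : ℝ) : EReal)) =
      ⨆ n : ℕ, ⨆ ν : ProbabilityMeasure Y, (((∫ y, g y ∂(ν : Measure Y)) : ℝ) : EReal) -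
        (((1 / ((n : ℝ) + 1)) : ℝ) : EReal) * C ν := by
  apply le_antisymm
  · refine iSup₂_le fun ν hν => ?_
    obtain ⟨c, hc⟩ : ∃ c : ℝ, (c : EReal) = C ν :=
      ⟨(C ν).toReal, EReal.coe_toReal hν (ne_bot_of_le_ne_bot EReal.zero_ne_bot (hC ν))⟩
    have hlim : Tendsto (fun n : ℕ => (((∫ y, g y ∂(ν : Measure Y)) : ℝ) : EReal) -
        (((1 / ((n : ℝ) + 1)) : ℝ) : EReal) * C ν) atTop
        (𝓝 (((∫ y, g y ∂(ν : Measure Y)) : ℝ) : EReal)) := by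
      simp only [← hc, ← EReal.coe_mul, ← EReal.coe_sub]
      refine (continuous_coe_real_ereal.tendsto _).comp ?_
      simpa using (tendsto_one_div_add_atTop_nhds_zero_nat (𝕜 := ℝ)).mul_const c |>.const_sub
        (∫ y, g y ∂(ν : Measure Y))
    refine le_of_tendsto' hlim fun n => ?_
    exact le_trans (le_iSup (fun ν : ProbabilityMeasure Y =>
        (((∫ y, g y ∂(ν : Measure Y)) : ℝ) : EReal) -
          (((1 / ((n : ℝ) + 1)) : ℝ) : EReal) * C ν) ν)
      (le_iSup (fun n : ℕ => ⨆ ν : ProbabilityMeasure Y,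
        (((∫ y, g y ∂(ν : Measure Y)) : ℝ) : EReal) -
          (((1 / ((n : ℝ) + 1)) : ℝ) : EReal) * C ν) n)
  · refine iSup_le fun n => iSup_le fun ν => ?_
    have hn : (0 : ℝ) < 1 / ((n : ℝ) + 1) := by positivity
    by_cases hν : C ν = ⊤
    · rw [hν, EReal.coe_mul_top_of_pos hn, EReal.sub_top]
      exact bot_le
    · refine le_trans ?_ (le_iSup₂ (f := fun (ν : ProbabilityMeasure Y)
        (_ : ν ∈ {ν : ProbabilityMeasure Y | C ν ≠ ⊤}) =>
          (((∫ y, g y ∂(ν : Measure Y)) : ℝ) : EReal)) ν hν)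
      refine (EReal.sub_le_sub le_rfl
        (mul_nonneg (by exact_mod_cast hn.le) (hC ν))).trans_eq (sub_zero _)

theorem Trec_eq_iSup_integral {X Y : Type*} [MeasurableSpace X] [TopologicalSpace Y]
    [MeasurableSpace Y] {𝒯 : ProbabilityMeasure X → ProbabilityMeasure Y → EReal}
    (hpos : ∀ μ ν, 0 ≤ 𝒯 μ ν) (g : C(Y, ℝ)) (x : X) :
    Trec 𝒯 g x = ⨆ σ ∈ {σ : ProbabilityMeasure Y | 𝒯 (diracP x) σ ≠ ⊤},
      (((∫ y, g y ∂(σ : Measure Y)) : ℝ) : EReal) := by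
  rw [Trec_eq_iSup_nat hpos, iSup_integral_eq_iSup_iSup_sub (hpos (diracP x))]
  refine iSup_congr fun n => ?_
  exact coe_mul_iSup_integral_smul_sub _ g (by positivity)

theorem IsBLT.iSup_integral_eq_eint_Trec {X Y : Type*}
    [MetricSpace X] [MeasurableSpace X] [BorelSpace X]
    [MetricSpace Y] [CompactSpace Y] [MeasurableSpace Y] [BorelSpace Y]
    {𝒯 : ProbabilityMeasure X → ProbabilityMeasure Y → EReal}
    (h𝒯 : IsBLT 𝒯) (hpos : ∀ μ ν, 0 ≤ 𝒯 μ ν) {μ : ProbabilityMeasure X}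
    (hμ : ∃ ν₀, 𝒯 μ ν₀ ≠ ⊤) (g : C(Y, ℝ)) :
    (⨆ ν ∈ {ν : ProbabilityMeasure Y | 𝒯 μ ν ≠ ⊤},
      (((∫ y, g y ∂(ν : Measure Y)) : ℝ) : EReal)) = eint (μ : Measure X) (Trec 𝒯 g) := by
  obtain ⟨-, -, -, -, hlsc, hdual⟩ := h𝒯
  obtain ⟨ν₀, hν₀⟩ := hμ
  have hscale (n : ℕ) : eint (μ : Measure X) (fun x =>
      (((1 / ((n : ℝ) + 1)) : ℝ) : EReal) * TopC 𝒯 (((n : ℝ) + 1) • g) x) =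
      ⨆ ν : ProbabilityMeasure Y, (((∫ y, g y ∂(ν : Measure Y)) : ℝ) : EReal) -
        (((1 / ((n : ℝ) + 1)) : ℝ) : EReal) * 𝒯 μ ν := by
    rw [eint_const_mul _ (by positivity), ← hdual,
      coe_mul_iSup_integral_smul_sub _ g (by positivity)]
  rw [iSup_integral_eq_iSup_iSup_sub (hpos μ), funext (Trec_eq_iSup_nat hpos g), eint_iSup]
  · exact iSup_congr fun n => (hscale n).symm
  · exact fun n => (measurable_TopC hlsc _).const_mul _
  · intro m n hmn x
    refine monotoneOn_coe_mul_TopC hpos g x ?_ ?_ ?_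
    · exact mem_Ioi.2 (by positivity)
    · exact mem_Ioi.2 (by positivity)
    · gcongr
  · rw [hscale 0]
    refine ne_bot_of_le_ne_bot ?_ (le_iSup _ ν₀)
    lift 𝒯 μ ν₀ to ℝ using ⟨hν₀, ne_bot_of_le_ne_bot EReal.zero_ne_bot (hpos μ ν₀)⟩ with c
    rw [← EReal.coe_mul, ← EReal.coe_sub]
    exact EReal.coe_ne_bot _

/-- The domain of a standard nonnegative backward linear transfer is contained in
the transfer set associated with the recession operator `T_r`, which is the
smallest backward transfer set containing it. -/
theorem recession_smallest_transfer_set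
    {X Y : Type*} [MetricSpace X] [CompactSpace X] [MeasurableSpace X] [BorelSpace X]
    [MetricSpace Y] [CompactSpace Y] [MeasurableSpace Y] [BorelSpace Y]
    (𝒯 : ProbabilityMeasure X → ProbabilityMeasure Y → EReal)
    (h𝒯 : IsBLT 𝒯) (hstd : IsStandardT 𝒯) (hpos : ∀ μ ν, 0 ≤ 𝒯 μ ν) :
    (∀ (g : C(Y, ℝ)) (x : X), MonotoneOn
        (fun l : ℝ => (((1 / l) : ℝ) : EReal) * TopC 𝒯 (l • g) x) (Ioi (0 : ℝ))) ∧
    (∀ μ : ProbabilityMeasure X, (∃ ν₀, 𝒯 μ ν₀ ≠ ⊤) → ∀ g : C(Y, ℝ),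
        (⨆ ν ∈ {ν : ProbabilityMeasure Y | 𝒯 μ ν ≠ ⊤},
          (((∫ y, g y ∂(ν : Measure Y)) : ℝ) : EReal))
          = eint (μ : Measure X) (Trec 𝒯 g)) ∧
    ({p : ProbabilityMeasure X × ProbabilityMeasure Y | 𝒯 p.1 p.2 ≠ ⊤}
        ⊆ {p | ∀ g : C(Y, ℝ), (((∫ y, g y ∂(p.2 : Measure Y)) : ℝ) : EReal)
            ≤ eint (p.1 : Measure X) (Trec 𝒯 g)}) ∧
    (∀ S : Set (ProbabilityMeasure X × ProbabilityMeasure Y),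
        PConvex S → IsCompact S → IsGamblingHouse S →
        {p : ProbabilityMeasure X × ProbabilityMeasure Y | 𝒯 p.1 p.2 ≠ ⊤} ⊆ S →
        S = {p | ∀ g : C(Y, ℝ), (((∫ y, g y ∂(p.2 : Measure Y)) : ℝ) : EReal)
            ≤ eint (p.1 : Measure X) (houseOp S g)} →
        {p : ProbabilityMeasure X × ProbabilityMeasure Y |
            ∀ g : C(Y, ℝ), (((∫ y, g y ∂(p.2 : Measure Y)) : ℝ) : EReal)
              ≤ eint (p.1 : Measure X) (Trec 𝒯 g)} ⊆ S) := by
  have ha := fun (μ : ProbabilityMeasure X) (hμ : ∃ ν₀, 𝒯 μ ν₀ ≠ ⊤) (g : C(Y, ℝ)) =>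
    h𝒯.iSup_integral_eq_eint_Trec hpos hμ g
  refine ⟨monotoneOn_coe_mul_TopC hpos, ha, ?_, ?_⟩
  · rintro ⟨μ, ν⟩ hp g
    rw [← ha μ ⟨ν, hp⟩ g]
    exact le_iSup₂ (f := fun (ν : ProbabilityMeasure Y)
      (_ : ν ∈ {ν : ProbabilityMeasure Y | 𝒯 μ ν ≠ ⊤}) =>
        (((∫ y, g y ∂(ν : Measure Y)) : ℝ) : EReal)) ν hp
  · intro S _ _ _ hsub hS p hp
    rw [hS]
    intro g
    refine (hp g).trans (eint_mono _ fun x => ?_)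
    rw [Trec_eq_iSup_integral hpos]
    exact biSup_mono fun σ hσ => hsub hσ
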